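/- If d = 2, then for each r ∈ ℤ², r ≠ 0, one has the expansion G_λ(0, 0) - G_λ(0, r) = ρ_2(r)/a + γ̃_2(r) λ ln λ + o(λ ln λ) as λ → 0+. -/

import Mathlib

open MeasureTheory Real Filter Topology Asymptotics

/-- Fourier symbol `φ(θ) = ∑_z a(z) cos⟨z,θ⟩` of the random walk on `ℤ^d`. -/
noncomputable def phiSymb (d : ℕ) (a : (Fin d → ℤ) → ℝ) (θ : Fin d → ℝ) : ℝ :=
  ∑' z : Fin d → ℤ, a z * Real.cos (∑ i, (z i : ℝ) * θ i)

/-- Transition probability `p(t;x,y) = (2π)^{-d} ∫_{[-π,π]^d} e^{φ(θ)t} cos⟨θ,y-x⟩ dθ`. -/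
noncomputable def ptrans (d : ℕ) (a : (Fin d → ℤ) → ℝ) (t : ℝ) (x y : Fin d → ℤ) : ℝ :=
  ((2 * π) ^ d)⁻¹ *
    ∫ θ in Set.Icc (fun _ : Fin d => -π) (fun _ : Fin d => π),
      Real.exp (phiSymb d a θ * t) * Real.cos (∑ i, θ i * ((y i : ℝ) - (x i : ℝ)))

/-- Laplace transform `G_λ(x,y) = ∫_0^∞ e^{-λt} p(t;x,y) dt` (Green's function at `λ = 0`). -/
noncomputable def Glam (d : ℕ) (a : (Fin d → ℤ) → ℝ) (lam : ℝ) (x y : Fin d → ℤ) : ℝ :=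
  ∫ t in Set.Ioi (0 : ℝ), Real.exp (-lam * t) * ptrans d a t x y

/-- Hessian matrix `φ''(0)`, with entries `-∑_z a(z) z_i z_j`. -/
noncomputable def hessPhi (d : ℕ) (a : (Fin d → ℤ) → ℝ) : Matrix (Fin d) (Fin d) ℝ :=
  Matrix.of fun i j => -∑' z : Fin d → ℤ, a z * (z i : ℝ) * (z j : ℝ)

/-- `γ_d = (2π)^{-d/2} |det φ''(0)|^{-1/2}`. -/
noncomputable def gammaConst (d : ℕ) (a : (Fin d → ℤ) → ℝ) : ℝ :=
  ((2 * π) ^ ((d : ℝ) / 2))⁻¹ * (Real.sqrt |(hessPhi d a).det|)⁻¹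

/-- `ρ_d(x) = (a/(2π)^d) ∫_{[-π,π]^d} (cos⟨x,θ⟩ - 1)/φ(θ) dθ` for `x ≠ 0`, and `ρ_d(0) = 1`. -/
noncomputable def rhoConst (d : ℕ) (a : (Fin d → ℤ) → ℝ) (x : Fin d → ℤ) : ℝ :=
  if x = 0 then 1 else
    (-(a 0) / (2 * π) ^ d) *
      ∫ θ in Set.Icc (fun _ : Fin d => -π) (fun _ : Fin d => π),
        (Real.cos (∑ i, (x i : ℝ) * θ i) - 1) / phiSymb d a θ

/-- `γ̃_d(z) = (1/(2(2π)^d)) ∫_{ℝ^d} ⟨v,z⟩² e^{⟨φ''(0)v,v⟩/2} dv`. -/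
noncomputable def gammaTilde (d : ℕ) (a : (Fin d → ℤ) → ℝ) (z : Fin d → ℤ) : ℝ :=
  (2 * (2 * π) ^ d)⁻¹ *
    ∫ v : Fin d → ℝ, (∑ i, v i * (z i : ℝ)) ^ 2 *
      Real.exp ((∑ i, (hessPhi d a).mulVec v i * v i) / 2)

theorem tendsto_one_sub_exp_neg_div :
    Tendsto (fun x : ℝ => (1 - rexp (-x)) / x) (𝓝[>] 0) (𝓝 1) := by
  have h : HasDerivAt (fun x : ℝ => 1 - rexp (-x)) 1 0 := by
    simpa using ((hasDerivAt_neg (0 : ℝ)).exp).const_sub 1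
  have h' := (hasDerivAt_iff_tendsto_slope.1 h).mono_left
    (nhdsWithin_mono 0 (fun x (hx : 0 < x) => hx.ne'))
  refine h'.congr fun x => ?_
  simp [slope_def_field]

theorem integral_Ioi_eq_integral_exp_mul (f : ℝ → ℝ) {L : ℝ} (hL : 0 < L) :
    ∫ t in Set.Ioi (0 : ℝ), f t = ∫ u, L * rexp (u * L) * f (rexp (u * L)) := by
  have himg : (fun u : ℝ => rexp (u * L)) '' Set.univ = Set.Ioi 0 := by
    ext t
    simp only [Set.image_univ, Set.mem_range, Set.mem_Ioi]
    refine ⟨?_, fun ht => ⟨Real.log t / L, ?_⟩⟩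
    · rintro ⟨u, rfl⟩
      exact Real.exp_pos _
    · rw [div_mul_cancel₀ _ hL.ne', Real.exp_log ht]
  have hd : ∀ u ∈ Set.univ, HasDerivWithinAt (fun u : ℝ => rexp (u * L))
      (rexp (u * L) * L) Set.univ u := fun u _ => by
    simpa using ((hasDerivAt_id u).mul_const L).exp
  have hinj : Set.InjOn (fun u : ℝ => rexp (u * L)) Set.univ := fun u _ v _ huv =>
    mul_right_cancel₀ hL.ne' (Real.exp_injective huv)
  rw [← himg, integral_image_eq_integral_abs_deriv_smul MeasurableSet.univ hd hinj]
  simp only [Measure.restrict_univ, smul_eq_mul]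
  refine integral_congr_ae (ae_of_all _ fun u => ?_)
  simp only
  rw [abs_of_pos (by positivity)]
  ring

theorem integrable_exp_one_sub_abs : Integrable fun u : ℝ => rexp (1 - |u|) := by
  have h0 : Integrable fun u : ℝ => rexp (-|u|) := by
    rw [← integrableOn_univ, ← Set.Iic_union_Ioi (a := (0 : ℝ)), integrableOn_union]
    constructor
    · refine (integrableOn_exp_Iic 0).congr_fun (fun u hu => ?_) measurableSet_Iic
      rw [abs_of_nonpos hu, neg_neg]
    · refine (integrableOn_exp_neg_Ioi 0).congr_fun (fun u hu => ?_) measurableSet_Ioi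
      simp only
      rw [abs_of_pos hu]
  have h := h0.const_mul (rexp 1)
  refine h.congr (ae_of_all _ fun u => ?_)
  simp only
  rw [← Real.exp_add, sub_eq_add_neg]

section Abelian

variable {q : ℝ → ℝ} {K γ : ℝ}

theorem abs_abelian_integrand_le (hK : ∀ t > 0, |q t| ≤ K) (hK2 : ∀ t > 0, |t ^ 2 * q t| ≤ K)
    (L u : ℝ) :
    |(1 - rexp (-rexp ((u - 1) * L))) / rexp ((u - 1) * L)
        * (rexp (u * L) ^ 2 * q (rexp (u * L)))|
      ≤ K ∧
    |(1 - rexp (-rexp ((u - 1) * L))) / rexp ((u - 1) * L)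
        * (rexp (u * L) ^ 2 * q (rexp (u * L)))|
      ≤ K * rexp (2 * (u * L)) ∧
    |(1 - rexp (-rexp ((u - 1) * L))) / rexp ((u - 1) * L)
        * (rexp (u * L) ^ 2 * q (rexp (u * L)))|
      ≤ K * rexp ((1 - u) * L) := by
  have hx : 0 < rexp ((u - 1) * L) := Real.exp_pos _
  have ht : 0 < rexp (u * L) := Real.exp_pos _
  have hinv : rexp ((1 - u) * L) = (rexp ((u - 1) * L))⁻¹ := by
    rw [← Real.exp_neg]
    ring_nf
  have hsq : rexp (2 * (u * L)) = rexp (u * L) ^ 2 := by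
    rw [← Real.exp_nat_mul]
    norm_num
  rw [hinv, hsq]
  set x := rexp ((u - 1) * L)
  set t := rexp (u * L)
  have h0 : 0 ≤ 1 - rexp (-x) := by
    have : rexp (-x) ≤ 1 := Real.exp_le_one_iff.2 (by linarith)
    linarith
  have h1 : 1 - rexp (-x) ≤ x := by
    have := Real.add_one_le_exp (-x)
    linarith
  have h2 : 1 - rexp (-x) ≤ 1 := by
    have := Real.exp_pos (-x)
    linarith
  have hw0 : 0 ≤ (1 - rexp (-x)) / x := div_nonneg h0 hx.le
  have hw1 : (1 - rexp (-x)) / x ≤ 1 := (div_le_one hx).2 h1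
  have hw2 : (1 - rexp (-x)) / x ≤ x⁻¹ := by
    rw [div_eq_mul_inv]
    exact mul_le_of_le_one_left (inv_nonneg.2 hx.le) h2
  have hKt := hK t ht
  have hK2t := hK2 t ht
  rw [abs_mul, abs_of_nonneg hw0]
  refine ⟨?_, ?_, ?_⟩
  · calc _ ≤ 1 * K := mul_le_mul hw1 hK2t (abs_nonneg _) zero_le_one
      _ = K := one_mul K
  · calc _ ≤ 1 * (t ^ 2 * K) := by
          refine mul_le_mul hw1 ?_ (abs_nonneg _) zero_le_one
          rw [abs_mul, abs_of_nonneg (sq_nonneg t)]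
          exact mul_le_mul_of_nonneg_left hKt (sq_nonneg t)
      _ = K * t ^ 2 := by ring
  · calc _ ≤ x⁻¹ * K := mul_le_mul hw2 hK2t (abs_nonneg _) (inv_nonneg.2 hx.le)
      _ = K * x⁻¹ := mul_comm _ _

theorem tendsto_exp_mul_atTop_of_neg {b : ℝ} (hb : b < 0) :
    Tendsto (fun L : ℝ => rexp (b * L)) atTop (𝓝 0) :=
  Real.tendsto_exp_atBot.comp (tendsto_id.const_mul_atTop_of_neg hb)

theorem tendsto_abelian_integrand (hK : ∀ t > 0, |q t| ≤ K) (hK2 : ∀ t > 0, |t ^ 2 * q t| ≤ K)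
    (hγ : Tendsto (fun t => t ^ 2 * q t) atTop (𝓝 γ)) {u : ℝ} (hu0 : u ≠ 0) (hu1 : u ≠ 1) :
    Tendsto (fun L : ℝ => (1 - rexp (-rexp ((u - 1) * L))) / rexp ((u - 1) * L)
        * (rexp (u * L) ^ 2 * q (rexp (u * L)))) atTop
      (𝓝 ((Set.Ioo (0 : ℝ) 1).indicator (fun _ => γ) u)) := by
  rcases lt_or_gt_of_ne hu0 with h | h
  · rw [Set.indicator_of_notMem (by simp [h.le])]
    refine squeeze_zero_norm (fun L => (abs_abelian_integrand_le hK hK2 L u).2.1) ?_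
    have := (tendsto_exp_mul_atTop_of_neg (b := 2 * u) (by linarith)).const_mul K
    simpa only [mul_zero, mul_assoc] using this
  rcases lt_or_gt_of_ne hu1 with h' | h'
  · rw [Set.indicator_of_mem (Set.mem_Ioo.2 ⟨h, h'⟩)]
    have hx : Tendsto (fun L : ℝ => rexp ((u - 1) * L)) atTop (𝓝[>] 0) :=
      tendsto_nhdsWithin_iff.2 ⟨tendsto_exp_mul_atTop_of_neg (by linarith),
        .of_forall fun _ => Real.exp_pos _⟩
    have ht : Tendsto (fun L : ℝ => rexp (u * L)) atTop atTop :=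
      Real.tendsto_exp_atTop.comp (tendsto_id.const_mul_atTop h)
    simpa using (tendsto_one_sub_exp_neg_div.comp hx).mul (hγ.comp ht)
  · rw [Set.indicator_of_notMem (by simp [h'.le])]
    refine squeeze_zero_norm (fun L => (abs_abelian_integrand_le hK hK2 L u).2.2) ?_
    have := (tendsto_exp_mul_atTop_of_neg (b := 1 - u) (by linarith)).const_mul K
    simpa only [mul_zero] using this

/-- An Abelian theorem: if `q` is bounded on `(0, ∞)` and `t² q(t) → γ` as `t → ∞`, then
`∫₀^∞ (1 - e^{-λt}) q(t) dt ∼ γ λ ln (1/λ)` as `λ → 0+`. -/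
theorem tendsto_integral_one_sub_exp_mul_div (hq : Measurable q)
    (hK : ∀ t > 0, |q t| ≤ K) (hK2 : ∀ t > 0, |t ^ 2 * q t| ≤ K)
    (hγ : Tendsto (fun t => t ^ 2 * q t) atTop (𝓝 γ)) :
    Tendsto (fun lam : ℝ => (∫ t in Set.Ioi (0 : ℝ), (1 - rexp (-lam * t)) * q t)
      / (lam * -Real.log lam)) (𝓝[>] 0) (𝓝 γ) := by
  have hK0 : 0 ≤ K := (abs_nonneg _).trans (hK 1 one_pos)
  have key : Tendsto (fun L : ℝ => ∫ u : ℝ,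
      (1 - rexp (-rexp ((u - 1) * L))) / rexp ((u - 1) * L)
        * (rexp (u * L) ^ 2 * q (rexp (u * L)))) atTop
      (𝓝 (∫ u, (Set.Ioo (0 : ℝ) 1).indicator (fun _ => γ) u)) := by
    refine tendsto_integral_filter_of_dominated_convergence (fun u => K * rexp (1 - |u|))
      (.of_forall fun L => ?_) ?_ (integrable_exp_one_sub_abs.const_mul K) ?_
    · exact (by fun_prop : Measurable _).aestronglyMeasurable
    · filter_upwards [eventually_ge_atTop (1 : ℝ)] with L hL
      refine ae_of_all _ fun u => ?_
      obtain ⟨b0, b1, b2⟩ := abs_abelian_integrand_le hK hK2 L u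
      rw [Real.norm_eq_abs]
      rcases le_total u 0 with h | h
      · refine b1.trans (mul_le_mul_of_nonneg_left (Real.exp_le_exp.2 ?_) hK0)
        rw [abs_of_nonpos h]
        nlinarith
      rw [abs_of_nonneg h]
      rcases le_total u 1 with h' | h'
      · exact b0.trans (le_mul_of_one_le_right hK0 (Real.one_le_exp (by linarith)))
      · refine b2.trans (mul_le_mul_of_nonneg_left (Real.exp_le_exp.2 ?_) hK0)
        nlinarith
    · filter_upwards [Measure.ae_ne volume (0 : ℝ), Measure.ae_ne volume (1 : ℝ)] with u h0 h1
      exact tendsto_abelian_integrand hK hK2 hγ h0 h1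
  rw [integral_indicator measurableSet_Ioo] at key
  simp only [integral_const, MeasurableSet.univ, measureReal_restrict_apply, Set.univ_inter,
    Real.volume_real_Ioo, sub_zero, zero_le_one, sup_of_le_left, smul_eq_mul, one_mul] at key
  have hlog : Tendsto (fun lam : ℝ => -Real.log lam) (𝓝[>] 0) atTop :=
    tendsto_neg_atBot_atTop.comp Real.tendsto_log_nhdsGT_zero
  refine (key.comp hlog).congr' ?_
  filter_upwards [self_mem_nhdsWithin, hlog.eventually_ge_atTop 1] with lam hlam hL
  have hlam : 0 < lam := hlam
  rw [integral_Ioi_eq_integral_exp_mul _ (by linarith : 0 < -Real.log lam), ← integral_div]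
  refine integral_congr_ae (ae_of_all _ fun u => ?_)
  simp only
  have hx : rexp ((u - 1) * -Real.log lam) = lam * rexp (u * -Real.log lam) := by
    rw [sub_mul, sub_eq_add_neg, Real.exp_add, one_mul, neg_neg, Real.exp_log hlam, mul_comm]
  rw [hx, neg_mul]
  have ht := Real.exp_pos (u * -Real.log lam)
  have hL' : Real.log lam ≠ 0 := by linarith
  field_simp

end Abelian

section Symbol

variable {d : ℕ} {a : (Fin d → ℤ) → ℝ}

theorem one_sub_cos_add_le (x y : ℝ) :
    1 - Real.cos (x + y) ≤ 2 * (1 - Real.cos x) + 2 * (1 - Real.cos y) := by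
  have hhalf : ∀ s : ℝ, 1 - Real.cos s = 2 * Real.sin (s / 2) ^ 2 := fun s => by
    rw [Real.sin_sq_eq_half_sub]
    ring_nf
  rw [hhalf, hhalf, hhalf, add_div, Real.sin_add]
  set u := x / 2
  set v := y / 2
  have h1 := Real.sin_sq_add_cos_sq u
  have h2 := Real.sin_sq_add_cos_sq v
  have h3 : (Real.sin u * Real.cos v) ^ 2 ≤ Real.sin u ^ 2 := by
    rw [mul_pow]
    exact mul_le_of_le_one_right (sq_nonneg _) (by nlinarith [sq_nonneg (Real.sin v)])
  have h4 : (Real.cos u * Real.sin v) ^ 2 ≤ Real.sin v ^ 2 := by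
    rw [mul_pow]
    exact mul_le_of_le_one_left (sq_nonneg _) (by nlinarith [sq_nonneg (Real.sin u)])
  nlinarith [sq_nonneg (Real.sin u * Real.cos v - Real.cos u * Real.sin v)]

theorem summable_mul_cos (ha : Summable a) (θ : Fin d → ℝ) :
    Summable fun z : Fin d → ℤ => a z * Real.cos (∑ i, (z i : ℝ) * θ i) := by
  refine Summable.of_norm_bounded ha.abs fun z => ?_
  rw [Real.norm_eq_abs, abs_mul]
  exact mul_le_of_le_one_right (abs_nonneg _) (Real.abs_cos_le_one _)

theorem hasSum_neg_phiSymb (hsum : HasSum a 0) (θ : Fin d → ℝ) :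
    HasSum (fun z : Fin d → ℤ => a z * (1 - Real.cos (∑ i, (z i : ℝ) * θ i)))
      (-phiSymb d a θ) := by
  have h := hsum.sub (summable_mul_cos hsum.summable θ).hasSum
  rw [zero_sub] at h
  exact h.congr_fun (fun z => by ring)

theorem continuous_phiSymb (ha : Summable a) : Continuous (phiSymb d a) := by
  refine continuous_tsum (fun z => by fun_prop) ha.abs fun z θ => ?_
  rw [Real.norm_eq_abs, abs_mul]
  exact mul_le_of_le_one_right (abs_nonneg _) (Real.abs_cos_le_one _)

theorem mul_one_sub_cos_nonneg (hpos : ∀ z : Fin d → ℤ, z ≠ 0 → 0 ≤ a z) (z : Fin d → ℤ)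
    (θ : Fin d → ℝ) : 0 ≤ a z * (1 - Real.cos (∑ i, (z i : ℝ) * θ i)) := by
  by_cases hz : z = 0
  · simp [hz]
  · exact mul_nonneg (hpos z hz) (sub_nonneg.2 (Real.cos_le_one _))

theorem phiSymb_nonpos (hpos : ∀ z : Fin d → ℤ, z ≠ 0 → 0 ≤ a z) (hsum : HasSum a 0)
    (θ : Fin d → ℝ) : phiSymb d a θ ≤ 0 :=
  neg_nonneg.1 ((hasSum_neg_phiSymb hsum θ).nonneg fun z => mul_one_sub_cos_nonneg hpos z θ)

/-- Irreducibility makes `-φ` dominate `1 - cos⟨z,θ⟩` for every lattice vector `z`. -/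
theorem exists_one_sub_cos_le_mul_neg_phiSymb (hpos : ∀ z : Fin d → ℤ, z ≠ 0 → 0 ≤ a z)
    (hsum : HasSum a 0)
    (hirr : AddSubgroup.closure {z : Fin d → ℤ | 0 < a z} = ⊤) (z : Fin d → ℤ) :
    ∃ C : ℝ, ∀ θ : Fin d → ℝ,
      1 - Real.cos (∑ i, (z i : ℝ) * θ i) ≤ C * -phiSymb d a θ := by
  have hz : z ∈ AddSubgroup.closure {z : Fin d → ℤ | 0 < a z} := hirr ▸ AddSubgroup.mem_top z
  induction hz using AddSubgroup.closure_induction with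
  | mem z hz =>
    have hz : 0 < a z := hz
    refine ⟨(a z)⁻¹, fun θ => ?_⟩
    rw [← div_eq_inv_mul, le_div_iff₀ hz, mul_comm]
    exact le_hasSum (hasSum_neg_phiSymb hsum θ) z fun w _ => mul_one_sub_cos_nonneg hpos w θ
  | zero => exact ⟨0, fun θ => by simp⟩
  | add x y _ _ hx hy =>
    obtain ⟨C, hC⟩ := hx
    obtain ⟨D, hD⟩ := hy
    refine ⟨2 * C + 2 * D, fun θ => ?_⟩
    have h := one_sub_cos_add_le (∑ i, (x i : ℝ) * θ i) (∑ i, (y i : ℝ) * θ i)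
    rw [← Finset.sum_add_distrib] at h
    simp only [Pi.add_apply, Int.cast_add, add_mul]
    linarith [hC θ, hD θ]
  | neg x _ hx =>
    obtain ⟨C, hC⟩ := hx
    refine ⟨C, fun θ => ?_⟩
    simpa [Finset.sum_neg_distrib] using hC θ

theorem exists_mul_sum_sq_le_neg_phiSymb (hpos : ∀ z : Fin d → ℤ, z ≠ 0 → 0 ≤ a z)
    (hsum : HasSum a 0)
    (hirr : AddSubgroup.closure {z : Fin d → ℤ | 0 < a z} = ⊤) :
    ∃ c > 0, ∀ θ ∈ Set.Icc (fun _ : Fin d => -π) (fun _ : Fin d => π),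
      c * ∑ i, θ i ^ 2 ≤ -phiSymb d a θ := by
  choose C hC using fun i : Fin d =>
    exists_one_sub_cos_le_mul_neg_phiSymb hpos hsum hirr (Pi.single i 1)
  have hCi : ∀ i θ, 1 - Real.cos (θ i) ≤ C i * -phiSymb d a θ := fun i θ => by
    have := hC i θ
    simpa [Pi.single_apply] using this
  set S : ℝ := 1 + ∑ i, |C i| with hS
  have hSpos : 0 < S := by
    have : 0 ≤ ∑ i, |C i| := Finset.sum_nonneg fun i _ => abs_nonneg _
    linarith
  have hπ := Real.pi_pos
  refine ⟨2 / π ^ 2 / S, by positivity, fun θ hθ => ?_⟩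
  have hφ : 0 ≤ -phiSymb d a θ := neg_nonneg.2 (phiSymb_nonpos hpos hsum θ)
  have h1 : ∀ i, 2 / π ^ 2 * θ i ^ 2 ≤ |C i| * -phiSymb d a θ := fun i => by
    have hb := Real.cos_le_one_sub_mul_cos_sq (abs_le.2 ⟨hθ.1 i, hθ.2 i⟩)
    have := mul_le_mul_of_nonneg_right (le_abs_self (C i)) hφ
    linarith [hCi i θ]
  have h2 : 2 / π ^ 2 * ∑ i, θ i ^ 2 ≤ S * -phiSymb d a θ := by
    rw [Finset.mul_sum]
    refine (Finset.sum_le_sum fun i _ => h1 i).trans ?_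
    rw [← Finset.sum_mul]
    exact mul_le_mul_of_nonneg_right (by linarith) hφ
  rw [div_mul_eq_mul_div, div_le_iff₀ hSpos]
  linarith

theorem sum_mul_sq_le (x y : Fin d → ℝ) :
    (∑ i, x i * y i) ^ 2 ≤ (∑ i, x i ^ 2) * ∑ i, y i ^ 2 :=
  Finset.sum_mul_sq_le_sq_mul_sq _ _ _

theorem one_sub_cos_le (x : ℝ) : 1 - Real.cos x ≤ x ^ 2 / 2 := by
  linarith [Real.one_sub_sq_div_two_le_cos (x := x)]

theorem tendsto_mul_one_sub_cos (x : ℝ) :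
    Tendsto (fun t : ℝ => t * (1 - Real.cos ((√t)⁻¹ * x))) atTop (𝓝 (x ^ 2 / 2)) := by
  have hy : Tendsto (fun t : ℝ => (√t)⁻¹ * x / 2) atTop (𝓝 0) := by
    simpa using ((tendsto_inv_atTop_zero.comp Real.tendsto_sqrt_atTop).mul_const x).div_const 2
  have hsinc : Tendsto (fun t : ℝ => Real.sinc ((√t)⁻¹ * x / 2)) atTop (𝓝 1) := by
    simpa [Function.comp_def] using (Real.continuous_sinc.tendsto 0).comp hy
  have h := (hsinc.pow 2).const_mul (x ^ 2 / 2)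
  rw [one_pow, mul_one] at h
  refine h.congr' ?_
  filter_upwards [eventually_gt_atTop 0] with t ht
  rcases eq_or_ne x 0 with rfl | hx
  · simp
  have hs : 0 < √t := Real.sqrt_pos.2 ht
  have hne : (√t)⁻¹ * x / 2 ≠ 0 := by positivity
  have hcos : Real.cos ((√t)⁻¹ * x) = 1 - 2 * Real.sin ((√t)⁻¹ * x / 2) ^ 2 := by
    rw [← Real.cos_two_mul_eq_one_sub]
    ring_nf
  rw [Real.sinc_of_ne_zero hne, hcos]
  have hst : √t ^ 2 = t := Real.sq_sqrt ht.le
  field_simp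
  rw [hst]
  ring

theorem hasSum_mul_sq_hessPhi
    (hpos : ∀ z : Fin d → ℤ, z ≠ 0 → 0 ≤ a z)
    (hvar : Summable fun z : Fin d → ℤ => (∑ i, ((z i : ℝ)) ^ 2) * a z) (v : Fin d → ℝ) :
    HasSum (fun z : Fin d → ℤ => a z * (∑ i, (z i : ℝ) * v i) ^ 2)
      (-∑ i, (hessPhi d a).mulVec v i * v i) := by
  have hs : ∀ i j, Summable fun z : Fin d → ℤ => a z * (z i : ℝ) * (z j : ℝ) := by
    intro i j
    refine Summable.of_norm_bounded hvar fun z => ?_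
    rcases eq_or_ne z 0 with rfl | hz
    · simp
    have hi : (z i : ℝ) ^ 2 ≤ ∑ k, (z k : ℝ) ^ 2 :=
      Finset.single_le_sum (f := fun k => (z k : ℝ) ^ 2) (fun k _ => sq_nonneg _)
        (Finset.mem_univ i)
    have hj : (z j : ℝ) ^ 2 ≤ ∑ k, (z k : ℝ) ^ 2 :=
      Finset.single_le_sum (f := fun k => (z k : ℝ) ^ 2) (fun k _ => sq_nonneg _)
        (Finset.mem_univ j)
    have hij : |(z i : ℝ) * (z j : ℝ)| ≤ ∑ k, (z k : ℝ) ^ 2 := by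
      rw [abs_le]
      constructor <;> nlinarith [sq_nonneg ((z i : ℝ) - z j), sq_nonneg ((z i : ℝ) + z j)]
    rw [Real.norm_eq_abs, mul_assoc, abs_mul, abs_of_nonneg (hpos z hz), mul_comm]
    exact mul_le_mul_of_nonneg_right hij (hpos z hz)
  have h : HasSum (fun z : Fin d → ℤ => ∑ i, ∑ j, a z * (z i : ℝ) * (z j : ℝ) * (v j * v i))
      (∑ i, ∑ j, (∑' z : Fin d → ℤ, a z * (z i : ℝ) * (z j : ℝ)) * (v j * v i)) :=
    hasSum_sum fun i _ => hasSum_sum fun j _ => (hs i j).hasSum.mul_right _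
  convert h using 1
  · funext z
    rw [sq, Finset.sum_mul_sum, Finset.mul_sum]
    refine Finset.sum_congr rfl fun i _ => ?_
    rw [Finset.mul_sum]
    exact Finset.sum_congr rfl fun j _ => by ring
  · rw [← Finset.sum_neg_distrib]
    refine Finset.sum_congr rfl fun i _ => ?_
    simp only [Matrix.mulVec, dotProduct, hessPhi, Matrix.of_apply, neg_mul,
      Finset.sum_neg_distrib, neg_neg, Finset.sum_mul]
    exact Finset.sum_congr rfl fun j _ => by ring

theorem sum_mul_smul (x v : Fin d → ℝ) (s : ℝ) :
    ∑ i, x i * (s • v) i = s * ∑ i, x i * v i := by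
  rw [Finset.mul_sum]
  exact Finset.sum_congr rfl fun i _ => by simp; ring

theorem tendsto_mul_phiSymb (hpos : ∀ z : Fin d → ℤ, z ≠ 0 → 0 ≤ a z) (hsum : HasSum a 0)
    (hvar : Summable fun z : Fin d → ℤ => (∑ i, ((z i : ℝ)) ^ 2) * a z) (v : Fin d → ℝ) :
    Tendsto (fun t : ℝ => phiSymb d a ((√t)⁻¹ • v) * t) atTop
      (𝓝 ((∑ i, (hessPhi d a).mulVec v i * v i) / 2)) := by
  have hQ := (hasSum_mul_sq_hessPhi hpos hvar v).div_const 2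
  have key : Tendsto (fun t : ℝ => ∑' z : Fin d → ℤ,
      a z * (t * (1 - Real.cos ((√t)⁻¹ * ∑ i, (z i : ℝ) * v i)))) atTop
      (𝓝 (∑' z : Fin d → ℤ, a z * ((∑ i, (z i : ℝ) * v i) ^ 2 / 2))) := by
    refine tendsto_tsum_of_dominated_convergence
      (bound := fun z => a z * (∑ i, (z i : ℝ) * v i) ^ 2 / 2) hQ.summable
      (fun z => (tendsto_mul_one_sub_cos _).const_mul _) ?_
    filter_upwards [eventually_gt_atTop 0] with t ht z
    rcases eq_or_ne z 0 with rfl | hz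
    · simp
    have h0 : 0 ≤ t * (1 - Real.cos ((√t)⁻¹ * ∑ i, (z i : ℝ) * v i)) :=
      mul_nonneg ht.le (sub_nonneg.2 (Real.cos_le_one _))
    rw [Real.norm_eq_abs, abs_of_nonneg (mul_nonneg (hpos z hz) h0), mul_div_assoc]
    refine mul_le_mul_of_nonneg_left ?_ (hpos z hz)
    refine (mul_le_mul_of_nonneg_left (one_sub_cos_le _) ht.le).trans_eq ?_
    have hst : √t ^ 2 = t := Real.sq_sqrt ht.le
    rw [mul_pow, inv_pow, hst]
    field_simp
  have h1 : ∑' z : Fin d → ℤ, a z * ((∑ i, (z i : ℝ) * v i) ^ 2 / 2)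
      = -((∑ i, (hessPhi d a).mulVec v i * v i) / 2) := by
    rw [← neg_div, ← hQ.tsum_eq]
    exact tsum_congr fun z => by ring
  rw [h1] at key
  have := key.neg
  rw [neg_neg] at this
  refine this.congr fun t => ?_
  have h2 := ((hasSum_neg_phiSymb hsum ((√t)⁻¹ • v)).mul_right t).tsum_eq
  rw [neg_mul] at h2
  rw [← neg_neg (phiSymb d a ((√t)⁻¹ • v) * t), ← h2]
  congr 1
  refine tsum_congr fun z => ?_
  rw [sum_mul_smul (fun i => (z i : ℝ))]
  ring

end Symbol

section HeatKernel

variable {d : ℕ} {a : (Fin d → ℤ) → ℝ}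

/-- The difference `p(t; 0, 0) - p(t; 0, r)` written as a single Fourier integral. -/
noncomputable def ptransDiff (d : ℕ) (a : (Fin d → ℤ) → ℝ) (r : Fin d → ℤ) (t : ℝ) : ℝ :=
  ((2 * π) ^ d)⁻¹ *
    ∫ θ in Set.Icc (fun _ : Fin d => -π) (fun _ : Fin d => π),
      Real.exp (phiSymb d a θ * t) * (1 - Real.cos (∑ i, (r i : ℝ) * θ i))

theorem ptrans_zero_sub_ptrans (ha : Summable a) (r : Fin d → ℤ) (t : ℝ) :
    ptrans d a t 0 0 - ptrans d a t 0 r = ptransDiff d a r t := by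
  have hφ := continuous_phiSymb ha
  have h : ∀ y : Fin d → ℤ, IntegrableOn (fun θ : Fin d → ℝ => Real.exp (phiSymb d a θ * t) *
      Real.cos (∑ i, θ i * ((y i : ℝ) - ((0 : Fin d → ℤ) i : ℝ))))
      (Set.Icc (fun _ : Fin d => -π) (fun _ : Fin d => π)) := fun y =>
    Continuous.integrableOn_Icc (by fun_prop)
  rw [ptrans, ptrans, ptransDiff, ← mul_sub, ← integral_sub (h 0) (h r)]
  congr 1
  refine integral_congr_ae (ae_of_all _ fun θ => ?_)
  simp [mul_sub, mul_comm]

theorem exp_phiSymb_mul_le_one (hpos : ∀ z : Fin d → ℤ, z ≠ 0 → 0 ≤ a z) (hsum : HasSum a 0)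
    (θ : Fin d → ℝ) {t : ℝ} (ht : 0 < t) : Real.exp (phiSymb d a θ * t) ≤ 1 :=
  Real.exp_le_one_iff.2 (mul_nonpos_of_nonpos_of_nonneg (phiSymb_nonpos hpos hsum θ) ht.le)

theorem exists_abs_setIntegral_exp_phiSymb_mul_le (hpos : ∀ z : Fin d → ℤ, z ≠ 0 → 0 ≤ a z)
    (hsum : HasSum a 0) {g : (Fin d → ℝ) → ℝ} {M : ℝ} (hg : ∀ θ, |g θ| ≤ M) :
    ∃ K, ∀ t > 0, |((2 * π) ^ d)⁻¹ *
      ∫ θ in Set.Icc (fun _ : Fin d => -π) (fun _ : Fin d => π),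
        Real.exp (phiSymb d a θ * t) * g θ| ≤ K := by
  refine ⟨|((2 * π) ^ d)⁻¹| *
    (M * volume.real (Set.Icc (fun _ : Fin d => -π) (fun _ : Fin d => π))), fun t ht => ?_⟩
  rw [abs_mul]
  refine mul_le_mul_of_nonneg_left ?_ (abs_nonneg _)
  rw [← Real.norm_eq_abs]
  refine norm_setIntegral_le_of_norm_le_const measure_Icc_lt_top fun θ _ => ?_
  rw [Real.norm_eq_abs, abs_mul, Real.abs_exp]
  exact (mul_le_of_le_one_left (abs_nonneg _) (exp_phiSymb_mul_le_one hpos hsum θ ht)).trans (hg θ)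

theorem measurable_setIntegral_exp_phiSymb_mul (ha : Summable a) {g : (Fin d → ℝ) → ℝ}
    (hg : Continuous g) :
    Measurable fun t : ℝ => ((2 * π) ^ d)⁻¹ *
      ∫ θ in Set.Icc (fun _ : Fin d => -π) (fun _ : Fin d => π),
        Real.exp (phiSymb d a θ * t) * g θ := by
  have hφ := continuous_phiSymb ha
  have hc : Continuous (Function.uncurry fun (t : ℝ) (θ : Fin d → ℝ) =>
      Real.exp (phiSymb d a θ * t) * g θ) := by
    unfold Function.uncurry
    fun_prop
  exact (hc.stronglyMeasurable.integral_prod_right).measurable.const_mul _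

theorem integrableOn_exp_neg_mul_ptrans (hpos : ∀ z : Fin d → ℤ, z ≠ 0 → 0 ≤ a z)
    (hsum : HasSum a 0) {lam : ℝ} (hlam : 0 < lam) (x y : Fin d → ℤ) :
    IntegrableOn (fun t => Real.exp (-lam * t) * ptrans d a t x y) (Set.Ioi 0) := by
  obtain ⟨K, hK⟩ := exists_abs_setIntegral_exp_phiSymb_mul_le hpos hsum
    (g := fun θ => Real.cos (∑ i, θ i * ((y i : ℝ) - (x i : ℝ))))
    fun θ => Real.abs_cos_le_one _
  have hm := measurable_setIntegral_exp_phiSymb_mul hsum.summable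
    (g := fun θ => Real.cos (∑ i, θ i * ((y i : ℝ) - (x i : ℝ)))) (by fun_prop)
  refine (integrableOn_exp_mul_Ioi (neg_lt_zero.2 hlam) 0).mul_bdd (c := K)
    hm.aestronglyMeasurable ?_
  filter_upwards [ae_restrict_mem measurableSet_Ioi] with t ht using hK t ht

theorem integrable_sum_sq_mul_exp_neg {c : ℝ} (hc : 0 < c) :
    Integrable fun v : Fin d → ℝ => (∑ i, v i ^ 2) * rexp (-(c * ∑ i, v i ^ 2)) := by
  have h1 : Integrable fun v : Fin d → ℝ => ∏ i, rexp (-(c / 2) * v i ^ 2) :=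
    Integrable.fintype_prod fun _ => integrable_exp_neg_mul_sq (by positivity)
  refine (h1.const_mul (2 / c)).mono' (by fun_prop) (ae_of_all _ fun v => ?_)
  have hS : 0 ≤ ∑ i, v i ^ 2 := Finset.sum_nonneg fun i _ => sq_nonneg _
  rw [← Real.exp_sum, ← Finset.mul_sum, Real.norm_eq_abs, abs_of_nonneg (by positivity)]
  set S := ∑ i, v i ^ 2
  have h2 : c / 2 * S ≤ rexp (c / 2 * S) := by linarith [Real.add_one_le_exp (c / 2 * S)]
  have h3 : S ≤ 2 / c * rexp (c / 2 * S) := by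
    calc S = 2 / c * (c / 2 * S) := by field_simp
      _ ≤ _ := mul_le_mul_of_nonneg_left h2 (by positivity)
  calc S * rexp (-(c * S)) ≤ 2 / c * rexp (c / 2 * S) * rexp (-(c * S)) :=
        mul_le_mul_of_nonneg_right h3 (Real.exp_pos _).le
    _ = 2 / c * rexp (-(c / 2) * S) := by
        rw [mul_assoc, ← Real.exp_add]
        ring_nf

theorem one_sub_cos_inner_le (r : Fin d → ℤ) (θ : Fin d → ℝ) :
    1 - Real.cos (∑ i, (r i : ℝ) * θ i) ≤ (∑ i, (r i : ℝ) ^ 2) / 2 * ∑ i, θ i ^ 2 := by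
  refine (one_sub_cos_le _).trans ?_
  linarith [sum_mul_sq_le (fun i => (r i : ℝ)) θ]

/-- Integrability, over `t > 0` and the box, of the integrand defining `ptransDiff`. -/
theorem integrable_exp_phiSymb_mul_one_sub_cos (hpos : ∀ z : Fin d → ℤ, z ≠ 0 → 0 ≤ a z)
    (hsum : HasSum a 0)
    (hirr : AddSubgroup.closure {z : Fin d → ℤ | 0 < a z} = ⊤) (r : Fin d → ℤ) :
    Integrable (Function.uncurry fun (t : ℝ) (θ : Fin d → ℝ) =>
        Real.exp (phiSymb d a θ * t) * (1 - Real.cos (∑ i, (r i : ℝ) * θ i)))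
      ((volume.restrict (Set.Ioi 0)).prod
        (volume.restrict (Set.Icc (fun _ : Fin d => -π) (fun _ : Fin d => π)))) ∧
    ∀ᵐ θ ∂(volume.restrict (Set.Icc (fun _ : Fin d => -π) (fun _ : Fin d => π))),
      ∫ t in Set.Ioi (0 : ℝ),
        Real.exp (phiSymb d a θ * t) * (1 - Real.cos (∑ i, (r i : ℝ) * θ i))
        = (Real.cos (∑ i, (r i : ℝ) * θ i) - 1) / phiSymb d a θ := by
  have hφ := continuous_phiSymb hsum.summable
  obtain ⟨c, hc, hcoer⟩ := exists_mul_sum_sq_le_neg_phiSymb hpos hsum hirr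
  have hdich : ∀ θ ∈ Set.Icc (fun _ : Fin d => -π) (fun _ : Fin d => π),
      θ = 0 ∨ phiSymb d a θ < 0 := by
    intro θ hθ
    by_cases h0 : θ = 0
    · exact Or.inl h0
    obtain ⟨i, hi⟩ := Function.ne_iff.1 h0
    have hi' : 0 < θ i ^ 2 := by
      have : θ i ≠ 0 := hi
      positivity
    have hle : θ i ^ 2 ≤ ∑ k, θ k ^ 2 :=
      Finset.single_le_sum (f := fun k => θ k ^ 2) (fun k _ => sq_nonneg _) (Finset.mem_univ i)
    have := hcoer θ hθ
    have := mul_pos hc (hi'.trans_le hle)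
    exact Or.inr (by linarith)
  have hint : ∀ θ ∈ Set.Icc (fun _ : Fin d => -π) (fun _ : Fin d => π),
      ∫ t in Set.Ioi (0 : ℝ),
        Real.exp (phiSymb d a θ * t) * (1 - Real.cos (∑ i, (r i : ℝ) * θ i))
        = (Real.cos (∑ i, (r i : ℝ) * θ i) - 1) / phiSymb d a θ := by
    intro θ hθ
    rcases hdich θ hθ with rfl | h
    · simp
    · rw [integral_mul_const, integral_exp_mul_Ioi h, mul_zero, Real.exp_zero]
      ring
  have hc' : Continuous (Function.uncurry fun (t : ℝ) (θ : Fin d → ℝ) =>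
      Real.exp (phiSymb d a θ * t) * (1 - Real.cos (∑ i, (r i : ℝ) * θ i))) := by
    unfold Function.uncurry
    fun_prop
  refine ⟨(integrable_prod_iff' hc'.aestronglyMeasurable).2 ⟨?_, ?_⟩, ?_⟩
  · filter_upwards [ae_restrict_mem measurableSet_Icc] with θ hθ
    rcases hdich θ hθ with rfl | h
    · simp
    · simp only [Function.uncurry_apply_pair]
      exact Integrable.mul_const (integrableOn_exp_mul_Ioi h 0) _
  · have hbd : ∀ θ ∈ Set.Icc (fun _ : Fin d => -π) (fun _ : Fin d => π),
        ‖(Real.cos (∑ i, (r i : ℝ) * θ i) - 1) / phiSymb d a θ‖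
          ≤ (∑ i, (r i : ℝ) ^ 2) / 2 / c := by
      intro θ hθ
      rcases hdich θ hθ with rfl | h
      · simp
        positivity
      · rw [Real.norm_eq_abs, abs_div, abs_of_neg h, abs_sub_comm,
          abs_of_nonneg (sub_nonneg.2 (Real.cos_le_one _)), div_le_iff₀ (neg_pos.2 h)]
        refine (one_sub_cos_inner_le r θ).trans ?_
        have hR : 0 ≤ (∑ i, (r i : ℝ) ^ 2) / 2 := by positivity
        calc _ = (∑ i, (r i : ℝ) ^ 2) / 2 / c * (c * ∑ i, θ i ^ 2) := by field_simp
          _ ≤ _ := mul_le_mul_of_nonneg_left (hcoer θ hθ) (by positivity)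
    have hI : IntegrableOn (fun θ : Fin d → ℝ =>
        (Real.cos (∑ i, (r i : ℝ) * θ i) - 1) / phiSymb d a θ)
        (Set.Icc (fun _ : Fin d => -π) (fun _ : Fin d => π)) := by
      refine Measure.integrableOn_of_bounded measure_Icc_lt_top.ne
        (Measurable.aestronglyMeasurable ?_)
        (M := (∑ i, (r i : ℝ) ^ 2) / 2 / c) ?_
      · have := hφ.measurable
        fun_prop
      · filter_upwards [ae_restrict_mem measurableSet_Icc] with θ hθ using hbd θ hθ
    refine hI.congr ?_
    filter_upwards [ae_restrict_mem measurableSet_Icc] with θ hθ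
    rw [← hint θ hθ]
    refine integral_congr_ae (ae_of_all _ fun t => ?_)
    simp only [Function.uncurry]
    rw [Real.norm_eq_abs, abs_of_nonneg]
    exact mul_nonneg (Real.exp_pos _).le (sub_nonneg.2 (Real.cos_le_one _))
  · filter_upwards [ae_restrict_mem measurableSet_Icc] with θ hθ using hint θ hθ

theorem integrableOn_ptransDiff (hpos : ∀ z : Fin d → ℤ, z ≠ 0 → 0 ≤ a z)
    (hsum : HasSum a 0)
    (hirr : AddSubgroup.closure {z : Fin d → ℤ | 0 < a z} = ⊤) (r : Fin d → ℤ) :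
    IntegrableOn (ptransDiff d a r) (Set.Ioi 0) :=
  (integrable_exp_phiSymb_mul_one_sub_cos hpos hsum hirr r).1.integral_prod_left.const_mul _

theorem integral_ptransDiff (hpos : ∀ z : Fin d → ℤ, z ≠ 0 → 0 ≤ a z) (hneg : a 0 < 0)
    (hsum : HasSum a 0)
    (hirr : AddSubgroup.closure {z : Fin d → ℤ | 0 < a z} = ⊤) {r : Fin d → ℤ} (hr : r ≠ 0) :
    ∫ t in Set.Ioi (0 : ℝ), ptransDiff d a r t = rhoConst d a r / (-(a 0)) := by
  obtain ⟨h1, h2⟩ := integrable_exp_phiSymb_mul_one_sub_cos hpos hsum hirr r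
  simp only [ptransDiff, rhoConst, if_neg hr]
  rw [integral_const_mul, integral_integral_swap h1, integral_congr_ae h2]
  have := hneg.ne
  field_simp

theorem Glam_zero_sub_Glam (hpos : ∀ z : Fin d → ℤ, z ≠ 0 → 0 ≤ a z) (hneg : a 0 < 0)
    (hsum : HasSum a 0)
    (hirr : AddSubgroup.closure {z : Fin d → ℤ | 0 < a z} = ⊤) {r : Fin d → ℤ} (hr : r ≠ 0)
    {lam : ℝ} (hlam : 0 < lam) :
    Glam d a lam 0 0 - Glam d a lam 0 r = rhoConst d a r / (-(a 0)) -
      ∫ t in Set.Ioi (0 : ℝ), (1 - rexp (-lam * t)) * ptransDiff d a r t := by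
  have h0 := integrableOn_exp_neg_mul_ptrans hpos hsum hlam (0 : Fin d → ℤ) 0
  have hr' := integrableOn_exp_neg_mul_ptrans hpos hsum hlam (0 : Fin d → ℤ) r
  have hG : Glam d a lam 0 0 - Glam d a lam 0 r
      = ∫ t in Set.Ioi (0 : ℝ), rexp (-lam * t) * ptransDiff d a r t := by
    rw [Glam, Glam, ← integral_sub h0 hr']
    simp only [← mul_sub, ptrans_zero_sub_ptrans hsum.summable]
  have hI : IntegrableOn (fun t => rexp (-lam * t) * ptransDiff d a r t) (Set.Ioi 0) := by
    refine (h0.sub hr').congr (ae_of_all _ fun t => ?_)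
    simp only [Pi.sub_apply, ← mul_sub, ptrans_zero_sub_ptrans hsum.summable]
  rw [hG, ← integral_ptransDiff hpos hneg hsum hirr hr]
  simp only [sub_mul, one_mul]
  rw [integral_sub (integrableOn_ptransDiff hpos hsum hirr r) hI, sub_sub_cancel]

end HeatKernel

section Planar

variable {a : (Fin 2 → ℤ) → ℝ}

theorem sq_mul_ptransDiff (r : Fin 2 → ℤ) {t : ℝ} (ht : 0 < t) :
    t ^ 2 * ptransDiff 2 a r t = ((2 * π) ^ 2)⁻¹ * ∫ v : Fin 2 → ℝ,
      (Set.Icc (fun _ : Fin 2 => -π) (fun _ : Fin 2 => π)).indicator (fun θ =>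
        rexp (phiSymb 2 a θ * t) * (t * (1 - Real.cos (∑ i, (r i : ℝ) * θ i))))
        ((√t)⁻¹ • v) := by
  have hst : √t ^ 2 = t := Real.sq_sqrt ht.le
  rw [Measure.integral_comp_smul, Module.finrank_fin_fun, inv_pow, hst, inv_inv, abs_of_pos ht,
    integral_indicator measurableSet_Icc, ptransDiff, smul_eq_mul]
  simp only [mul_left_comm _ t]
  rw [integral_const_mul]
  ring

theorem norm_rescaled_integrand_le {c : ℝ}
    (hcoer : ∀ θ ∈ Set.Icc (fun _ : Fin 2 => -π) (fun _ : Fin 2 => π),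
      c * ∑ i, θ i ^ 2 ≤ -phiSymb 2 a θ) (r : Fin 2 → ℤ) {t : ℝ} (ht : 0 < t) (v : Fin 2 → ℝ) :
    ‖(Set.Icc (fun _ : Fin 2 => -π) (fun _ : Fin 2 => π)).indicator (fun θ =>
        rexp (phiSymb 2 a θ * t) * (t * (1 - Real.cos (∑ i, (r i : ℝ) * θ i))))
        ((√t)⁻¹ • v)‖
      ≤ (∑ i, (r i : ℝ) ^ 2) / 2 * ((∑ i, v i ^ 2) * rexp (-(c * ∑ i, v i ^ 2))) := by
  have hst : √t ^ 2 = t := Real.sq_sqrt ht.le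
  have hnorm : t * ∑ i, ((√t)⁻¹ • v) i ^ 2 = ∑ i, v i ^ 2 := by
    simp only [Pi.smul_apply, smul_eq_mul, mul_pow, inv_pow, hst, ← Finset.mul_sum]
    field_simp
  rw [← hnorm]
  set θ := (√t)⁻¹ • v
  by_cases hθ : θ ∈ Set.Icc (fun _ : Fin 2 => -π) (fun _ : Fin 2 => π)
  · have h1 : 0 ≤ 1 - Real.cos (∑ i, (r i : ℝ) * θ i) := sub_nonneg.2 (Real.cos_le_one _)
    rw [Set.indicator_of_mem hθ, Real.norm_eq_abs, abs_of_nonneg (by positivity)]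
    have h2 : rexp (phiSymb 2 a θ * t) ≤ rexp (-(c * (t * ∑ i, θ i ^ 2))) := by
      refine Real.exp_le_exp.2 ?_
      have := mul_le_mul_of_nonneg_right (hcoer θ hθ) ht.le
      linarith
    have h3 := mul_le_mul_of_nonneg_left (one_sub_cos_inner_le r θ) ht.le
    refine (mul_le_mul h2 h3 (by positivity) (Real.exp_pos _).le).trans_eq ?_
    ring
  · rw [Set.indicator_of_notMem hθ, norm_zero]
    positivity

theorem exists_abs_sq_mul_ptransDiff_le (hpos : ∀ z : Fin 2 → ℤ, z ≠ 0 → 0 ≤ a z)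
    (hsum : HasSum a 0)
    (hirr : AddSubgroup.closure {z : Fin 2 → ℤ | 0 < a z} = ⊤) (r : Fin 2 → ℤ) :
    ∃ K, ∀ t > 0, |t ^ 2 * ptransDiff 2 a r t| ≤ K := by
  obtain ⟨c, hc, hcoer⟩ := exists_mul_sum_sq_le_neg_phiSymb hpos hsum hirr
  refine ⟨((2 * π) ^ 2)⁻¹ * ∫ v : Fin 2 → ℝ,
    (∑ i, (r i : ℝ) ^ 2) / 2 * ((∑ i, v i ^ 2) * rexp (-(c * ∑ i, v i ^ 2))), fun t ht => ?_⟩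
  rw [sq_mul_ptransDiff r ht, abs_mul, abs_of_nonneg (by positivity)]
  refine mul_le_mul_of_nonneg_left ?_ (by positivity)
  exact norm_integral_le_of_norm_le ((integrable_sum_sq_mul_exp_neg hc).const_mul _)
    (ae_of_all _ fun v => norm_rescaled_integrand_le hcoer r ht v)

theorem tendsto_sq_mul_ptransDiff (hpos : ∀ z : Fin 2 → ℤ, z ≠ 0 → 0 ≤ a z)
    (hsum : HasSum a 0)
    (hvar : Summable fun z : Fin 2 → ℤ => (∑ i, ((z i : ℝ)) ^ 2) * a z)
    (hirr : AddSubgroup.closure {z : Fin 2 → ℤ | 0 < a z} = ⊤) (r : Fin 2 → ℤ) :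
    Tendsto (fun t => t ^ 2 * ptransDiff 2 a r t) atTop (𝓝 (gammaTilde 2 a r)) := by
  obtain ⟨c, hc, hcoer⟩ := exists_mul_sum_sq_le_neg_phiSymb hpos hsum hirr
  have hφ := (continuous_phiSymb hsum.summable).measurable
  have key : Tendsto (fun t : ℝ => ∫ v : Fin 2 → ℝ,
      (Set.Icc (fun _ : Fin 2 => -π) (fun _ : Fin 2 => π)).indicator (fun θ =>
        rexp (phiSymb 2 a θ * t) * (t * (1 - Real.cos (∑ i, (r i : ℝ) * θ i))))
        ((√t)⁻¹ • v)) atTop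
      (𝓝 (∫ v : Fin 2 → ℝ, rexp ((∑ i, (hessPhi 2 a).mulVec v i * v i) / 2) *
        ((∑ i, (r i : ℝ) * v i) ^ 2 / 2))) := by
    refine tendsto_integral_filter_of_dominated_convergence _ (.of_forall fun t => ?_) ?_
      ((integrable_sum_sq_mul_exp_neg hc).const_mul ((∑ i, (r i : ℝ) ^ 2) / 2))
      (ae_of_all _ fun v => ?_)
    · refine Measurable.aestronglyMeasurable ?_
      refine Measurable.comp (Measurable.indicator ?_ measurableSet_Icc) (by fun_prop)
      fun_prop
    · filter_upwards [eventually_gt_atTop 0] with t ht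
      exact ae_of_all _ fun v => norm_rescaled_integrand_le hcoer r ht v
    · have hlim : Tendsto (fun t : ℝ => (√t)⁻¹ • v) atTop (𝓝 0) := by
        simpa [Function.comp_def] using
          (tendsto_inv_atTop_zero.comp Real.tendsto_sqrt_atTop).smul_const v
      have hbox : Set.Icc (fun _ : Fin 2 => -π) (fun _ : Fin 2 => π) ∈ 𝓝 (0 : Fin 2 → ℝ) :=
        pi_Icc_mem_nhds (fun _ => neg_lt_zero.2 Real.pi_pos) (fun _ => Real.pi_pos)
      have h := (Real.continuous_exp.tendsto _ |>.comp
        (tendsto_mul_phiSymb hpos hsum hvar v)).mul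
        (tendsto_mul_one_sub_cos (∑ i, (r i : ℝ) * v i))
      refine h.congr' ?_
      filter_upwards [hlim.eventually_mem hbox] with t ht
      rw [Set.indicator_of_mem ht, sum_mul_smul (fun i => (r i : ℝ))]
      rfl
  have hγ : gammaTilde 2 a r = ((2 * π) ^ 2)⁻¹ *
      ∫ v : Fin 2 → ℝ, rexp ((∑ i, (hessPhi 2 a).mulVec v i * v i) / 2) *
        ((∑ i, (r i : ℝ) * v i) ^ 2 / 2) := by
    rw [gammaTilde, mul_inv, mul_comm (2 : ℝ)⁻¹, mul_assoc, ← integral_const_mul]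
    congr 1
    refine integral_congr_ae (ae_of_all _ fun v => ?_)
    simp only [mul_comm (v _)]
    ring
  rw [hγ]
  refine (key.const_mul _).congr' ?_
  filter_upwards [eventually_gt_atTop 0] with t ht using (sq_mul_ptransDiff r ht).symm

end Planar

/-- For `d = 2` and `r ≠ 0`:
`G_λ(0,0) - G_λ(0,r) = ρ₂(r)/a + γ̃₂(r) λ ln λ + o(λ ln λ)` as `λ → 0+`. -/
theorem Glam_diff_expansion_d2
    (a : (Fin 2 → ℤ) → ℝ)
    (hpos : ∀ z : Fin 2 → ℤ, z ≠ 0 → 0 ≤ a z)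
    (hneg : a 0 < 0)
    (hsymm : ∀ z : Fin 2 → ℤ, a (-z) = a z)
    (hsum : HasSum a 0)
    (hvar : Summable fun z : Fin 2 → ℤ => (∑ i, ((z i : ℝ)) ^ 2) * a z)
    (hirr : AddSubgroup.closure {z : Fin 2 → ℤ | 0 < a z} = ⊤)
    (r : Fin 2 → ℤ) (hr : r ≠ 0) :
    (fun lam : ℝ => Glam 2 a lam 0 0 - Glam 2 a lam 0 r -
        (rhoConst 2 a r / (-(a 0)) + gammaTilde 2 a r * (lam * Real.log lam)))
      =o[𝓝[>] (0 : ℝ)] fun lam : ℝ => lam * Real.log lam := by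
  obtain ⟨K₁, hK₁⟩ : ∃ K, ∀ t > 0, |ptransDiff 2 a r t| ≤ K :=
    exists_abs_setIntegral_exp_phiSymb_mul_le hpos hsum (M := 2)
      (g := fun θ => 1 - Real.cos (∑ i, (r i : ℝ) * θ i)) fun θ => by
        rw [abs_le]
        constructor <;> linarith [Real.cos_le_one (∑ i, (r i : ℝ) * θ i),
          Real.neg_one_le_cos (∑ i, (r i : ℝ) * θ i)]
  obtain ⟨K₂, hK₂⟩ := exists_abs_sq_mul_ptransDiff_le hpos hsum hirr r
  have hmeas : Measurable (ptransDiff 2 a r) :=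
    measurable_setIntegral_exp_phiSymb_mul hsum.summable
      (g := fun θ => 1 - Real.cos (∑ i, (r i : ℝ) * θ i)) (by fun_prop)
  have hlim := tendsto_integral_one_sub_exp_mul_div hmeas
    (fun t ht => (hK₁ t ht).trans (le_max_left K₁ K₂))
    (fun t ht => (hK₂ t ht).trans (le_max_right K₁ K₂))
    (tendsto_sq_mul_ptransDiff hpos hsum hvar hirr r)
  have hne : ∀ᶠ lam in 𝓝[>] (0 : ℝ), lam * Real.log lam ≠ 0 := by
    filter_upwards [Ioo_mem_nhdsGT one_pos] with lam hlam
    exact mul_ne_zero hlam.1.ne' (Real.log_neg hlam.1 hlam.2).ne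
  refine (isLittleO_iff_tendsto' (hne.mono fun lam h h0 => absurd h0 h)).2 ?_
  have h0 := hlim.sub_const (gammaTilde 2 a r)
  rw [sub_self] at h0
  refine h0.congr' ?_
  filter_upwards [hne, self_mem_nhdsWithin] with lam hl hlam
  rw [Glam_zero_sub_Glam hpos hneg hsum hirr hr hlam, mul_neg]
  rw [div_neg, eq_div_iff hl, sub_mul, neg_mul, div_mul_cancel₀ _ hl]
  ring
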